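/- Let γ: ℝ/ℤ → ℝ³ be a C² injective closed curve parametrized by arc length (|γ′(s)| = 1 for all s, total length 1). Then the limit lim_{ε→0⁺} [ ∬_{{(s,t) : d(s,t) ≥ ε}} ds dt / |γ(s) − γ(t)|² − 2/ε ] exists, is finite, and equals −4 + ∬_{(ℝ/ℤ)²} ( 1/|γ(s) − γ(t)|² − 1/d(s,t)² ) ds dt, the latter integral also being finite. -/

import Mathlib

open MeasureTheory

noncomputable section

/-- ℝ³ with the Euclidean norm. -/
abbrev E3 := EuclideanSpace ℝ (Fin 3)

/-- The arc-length distance on ℝ/ℤ, written for parameters `s, t ∈ [0,1]`. -/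
def arcd (s t : ℝ) : ℝ := min |s - t| (1 - |s - t|)

/-- distance to the nearest integer -/
def rd (x : ℝ) : ℝ := |x - round x|

lemma rd_eq (x : ℝ) (hx : |x| ≤ 1) : rd x = min |x| (1 - |x|) := by
  unfold rd
  rw [abs_sub_round_eq_min]
  obtain ⟨h1, h2⟩ := abs_le.1 hx
  rcases lt_or_ge x 0 with h | h
  · have : Int.fract x = x + 1 := by
      rw [Int.fract_eq_iff]
      refine ⟨by linarith, by linarith, -1, by push_cast; ring⟩
    rw [this, abs_of_neg h, min_comm]
    congr 1 <;> ring
  · rcases eq_or_lt_of_le h2 with h' | h'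
    · subst h'
      simp
    · rw [Int.fract_eq_self.2 ⟨h, h'⟩, abs_of_nonneg h]

lemma rd_add_one (x : ℝ) : rd (x + 1) = rd x := by
  unfold rd
  rw [abs_sub_round_eq_min, abs_sub_round_eq_min, Int.fract_add_one]

lemma rd_measurable : Measurable rd := by
  have : rd = fun x => min (Int.fract x) (1 - Int.fract x) := by
    funext x; exact abs_sub_round_eq_min x
  rw [this]
  exact measurable_fract.min (measurable_const.sub measurable_fract)

def GG (ε x : ℝ) : ℝ := if ε ≤ rd x then 1 / rd x ^ 2 else 0

lemma GG_measurable (ε : ℝ) : Measurable (GG ε) := by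
  unfold GG
  refine Measurable.ite (measurableSet_le measurable_const rd_measurable) ?_ measurable_const
  exact measurable_const.div (rd_measurable.pow_const 2)

lemma GG_periodic (ε : ℝ) : Function.Periodic (GG ε) 1 := by
  intro x
  simp only [GG, rd_add_one]

lemma GG_bound (ε x : ℝ) (hε : 0 < ε) : ‖GG ε x‖ ≤ 1 / ε ^ 2 := by
  unfold GG
  split_ifs with h
  · rw [Real.norm_of_nonneg (by positivity)]
    gcongr
  · simp; positivity

lemma int_inv_sq (ε : ℝ) (hε : 0 < ε) (h2 : ε ≤ 1 / 2) :
    ∫ x in ε..(1/2), 1 / x ^ 2 = 1 / ε - 2 := by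
  have hpos : ∀ x ∈ Set.uIcc ε (1/2), x ≠ 0 := by
    intro x hx
    rw [Set.uIcc_of_le h2] at hx
    linarith [hx.1]
  rw [intervalIntegral.integral_eq_sub_of_hasDerivAt (f := fun x => - x⁻¹)]
  · norm_num; ring
  · intro x hx
    have := (hasDerivAt_inv (hpos x hx)).neg
    convert this using 1
    · rfl
    · rw [neg_neg, one_div]
  · apply ContinuousOn.intervalIntegrable
    intro x hx
    have := hpos x hx
    apply ContinuousAt.continuousWithinAt
    fun_prop (disch := positivity)

lemma int_GG (ε : ℝ) (hε : 0 < ε) (h2 : ε ≤ 1 / 2) :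
    ∫ x in (0:ℝ)..1, GG ε x = 2 / ε - 4 := by
  have e1 : ∫ x in (0:ℝ)..1, GG ε x = ∫ x in ε..(1-ε), GG ε x := by
    rw [intervalIntegral.integral_of_le zero_le_one, intervalIntegral.integral_of_le (by linarith),
      ← integral_Icc_eq_integral_Ioc, ← integral_Icc_eq_integral_Ioc]
    refine (setIntegral_eq_of_subset_of_forall_sdiff_eq_zero measurableSet_Icc ?_ ?_)
    · apply Set.Icc_subset_Icc <;> linarith
    · rintro x ⟨⟨h0, h1⟩, hx⟩
      unfold GG
      rw [if_neg]
      intro h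
      rw [rd_eq x (by rw [abs_of_nonneg h0]; exact h1), abs_of_nonneg h0, le_min_iff] at h
      exact hx ⟨h.1, by linarith [h.2]⟩
  have hi : ∀ a b, IntervalIntegrable (GG ε) volume a b := by
    intro a b
    rw [intervalIntegrable_iff]
    exact Measure.integrableOn_of_bounded (M := 1 / ε ^ 2) (by simp)
      (GG_measurable ε).aestronglyMeasurable (Filter.Eventually.of_forall fun x => GG_bound ε x hε)
  rw [e1, ← intervalIntegral.integral_add_adjacent_intervals (hi ε (1/2)) (hi (1/2) (1-ε))]
  have e2 : ∫ x in ε..(1/2), GG ε x = ∫ x in ε..(1/2), 1 / x ^ 2 := by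
    apply intervalIntegral.integral_congr
    intro x hx
    rw [Set.uIcc_of_le h2] at hx
    obtain ⟨a, b⟩ := hx
    have h0 : 0 ≤ x := by linarith
    have : rd x = x := by
      rw [rd_eq x (by rw [abs_of_nonneg h0]; linarith), abs_of_nonneg h0, min_eq_left (by linarith)]
    simp only [GG, this, if_pos a]
  have e3 : ∫ x in (1/2)..(1-ε), GG ε x = ∫ x in (1/2)..(1-ε), 1 / (1 - x) ^ 2 := by
    apply intervalIntegral.integral_congr
    intro x hx
    rw [Set.uIcc_of_le (by linarith)] at hx
    obtain ⟨a, b⟩ := hx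
    have h0 : 0 ≤ x := by linarith
    have : rd x = 1 - x := by
      rw [rd_eq x (by rw [abs_of_nonneg h0]; linarith), abs_of_nonneg h0, min_eq_right (by linarith)]
    simp only [GG, this, if_pos (show ε ≤ 1 - x by linarith)]
  have e4 : ∫ x in (1/2)..(1-ε), 1 / (1 - x) ^ 2 = ∫ x in ε..(1/2), 1 / x ^ 2 := by
    rw [intervalIntegral.integral_comp_sub_left (fun x => 1 / x ^ 2)]
    norm_num
  rw [e2, e3, e4, int_inv_sq ε hε h2]
  ring

lemma int_sq (ε : ℝ) (hε : 0 < ε) (h2 : ε ≤ 1 / 2) :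
    ∫ p in Set.Icc (0:ℝ) 1 ×ˢ Set.Icc (0:ℝ) 1, GG ε (p.1 - p.2) = 2 / ε - 4 := by
  have hm : Measurable (fun p : ℝ × ℝ => GG ε (p.1 - p.2)) :=
    (GG_measurable ε).comp (measurable_fst.sub measurable_snd)
  have hint : IntegrableOn (fun p : ℝ × ℝ => GG ε (p.1 - p.2))
      (Set.Icc (0:ℝ) 1 ×ˢ Set.Icc (0:ℝ) 1) := by
    refine Measure.integrableOn_of_bounded (M := 1 / ε ^ 2) ?_
      hm.aestronglyMeasurable (Filter.Eventually.of_forall fun x => GG_bound ε _ hε)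
    exact (isCompact_Icc.prod isCompact_Icc).measure_lt_top.ne
  rw [Measure.volume_eq_prod] at hint ⊢
  rw [setIntegral_prod _ hint]
  have : ∀ s : ℝ, ∫ t in Set.Icc (0:ℝ) 1, GG ε (s - t) = 2 / ε - 4 := by
    intro s
    rw [integral_Icc_eq_integral_Ioc, ← intervalIntegral.integral_of_le zero_le_one,
      intervalIntegral.integral_comp_sub_left (GG ε), ← int_GG ε hε h2]
    have := (GG_periodic ε).intervalIntegral_add_eq (s - 1) 0
    simpa using this
  simp [this]

lemma near_bound (γ : ℝ → E3) (hC2 : ContDiff ℝ 2 γ) (hunit : ∀ s : ℝ, ‖deriv γ s‖ = 1) :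
    ∃ K : ℝ, 0 < K ∧ ∀ s ∈ Set.Icc (-1:ℝ) 2, ∀ t ∈ Set.Icc (-1:ℝ) 2, s < t → K * (t - s) ≤ 1 →
      |1 / ‖γ t - γ s‖ ^ 2 - 1 / (t - s) ^ 2| ≤ 4 * K ^ 2 := by
  have hd : Differentiable ℝ γ := hC2.differentiable (by norm_num)
  have hC1 : ContDiff ℝ 1 (deriv γ) := by
    have : ContDiff ℝ (1 + 1) γ := by norm_num; exact hC2
    exact (contDiff_succ_iff_deriv.1 this).2.2
  have hdd : Differentiable ℝ (deriv γ) := hC1.differentiable (by norm_num)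
  obtain ⟨K0, hK0⟩ := (isCompact_Icc (a := (-1:ℝ)) (b := 2)).exists_bound_of_continuousOn
    (hC1.continuous_deriv le_rfl).continuousOn
  set K := max K0 1 with hK
  have hKpos : 0 < K := lt_of_lt_of_le one_pos (le_max_right _ _)
  refine ⟨K, hKpos, ?_⟩
  intro s hs t ht hst hsmall
  have hlip : ∀ u ∈ Set.Icc (-1:ℝ) 2, ‖deriv γ u - deriv γ s‖ ≤ K * ‖u - s‖ := by
    intro u hu
    exact (convex_Icc (-1:ℝ) 2).norm_image_sub_le_of_norm_deriv_le
      (fun x _ => hdd x) (fun x hx => (hK0 x hx).trans (le_max_left _ _)) hs hu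
  have hup : ‖γ t - γ s‖ ≤ t - s := by
    have := (convex_univ (𝕜 := ℝ) (E := ℝ)).norm_image_sub_le_of_norm_deriv_le (f := γ) (C := 1)
      (fun x _ => hd x) (fun x _ => (hunit x).le) (Set.mem_univ s) (Set.mem_univ t)
    rwa [one_mul, Real.norm_of_nonneg (by linarith)] at this
  set h := t - s with hh
  have hpos : 0 < h := by linarith
  have hlow : (1 - (K * h) ^ 2 / 2) * h ≤ ‖γ t - γ s‖ := by
    have hder : ∀ u, HasDerivAt (fun u => inner ℝ (deriv γ s) (γ u)) (inner ℝ (deriv γ s) (deriv γ u)) u := by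
      intro u
      have := (hasDerivAt_const u (deriv γ s)).inner ℝ (hd u).hasDerivAt
      simpa using this
    have key := (convex_Icc s t).mul_sub_le_image_sub_of_le_deriv
      (f := fun u => inner ℝ (deriv γ s) (γ u)) (C := 1 - (K * h) ^ 2 / 2)
      (fun u _ => (hder u).continuousAt.continuousWithinAt)
      (fun u _ => (hder u).differentiableAt.differentiableWithinAt)
      (by
        intro u hu
        rw [interior_Icc] at hu
        rw [(hder u).deriv]
        have h1 := hlip u ⟨by linarith [hu.1, hs.1], by linarith [hu.2, ht.2]⟩
        rw [Real.norm_of_nonneg (by linarith [hu.1])] at h1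
        have h2 : ‖deriv γ u - deriv γ s‖ ≤ K * h :=
          h1.trans (by gcongr; linarith [hu.2])
        have h3 := norm_sub_sq_real (deriv γ u) (deriv γ s)
        rw [hunit, hunit, real_inner_comm] at h3
        have h4 : ‖deriv γ u - deriv γ s‖ ^ 2 ≤ (K * h) ^ 2 := by gcongr
        linarith)
      s (Set.left_mem_Icc.2 hst.le) t (Set.right_mem_Icc.2 hst.le) hst.le
    refine key.trans ?_
    rw [← inner_sub_right]
    refine (real_inner_le_norm _ _).trans ?_
    rw [hunit, one_mul]
  set r := ‖γ t - γ s‖ with hr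
  have hKh : (K * h) ^ 2 ≤ 1 := by
    have : 0 ≤ K * h := by positivity
    nlinarith
  have hr2 : h / 2 ≤ r := by nlinarith
  have hrpos : 0 < r := by linarith
  have hnum : h ^ 2 - r ^ 2 ≤ K ^ 2 * h ^ 4 := by
    have a1 : h - r ≤ K ^ 2 * h ^ 3 / 2 := by nlinarith
    have a2 : h + r ≤ 2 * h := by linarith
    calc h ^ 2 - r ^ 2 = (h - r) * (h + r) := by ring
      _ ≤ (K ^ 2 * h ^ 3 / 2) * (2 * h) := by
        apply mul_le_mul a1 a2 (by linarith) (by positivity)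
      _ = _ := by ring
  have heq : 1 / r ^ 2 - 1 / h ^ 2 = (h ^ 2 - r ^ 2) / (r ^ 2 * h ^ 2) := by
    field_simp
  rw [heq, abs_of_nonneg (div_nonneg (by nlinarith) (by positivity)), div_le_iff₀ (by positivity)]
  have a3 : h ^ 2 ≤ 4 * r ^ 2 := by nlinarith
  calc h ^ 2 - r ^ 2 ≤ K ^ 2 * h ^ 4 := hnum
    _ = K ^ 2 * h ^ 2 * h ^ 2 := by ring
    _ ≤ K ^ 2 * (4 * r ^ 2) * h ^ 2 := by gcongr
    _ = _ := by ring

lemma arcd_nonneg' (s t : ℝ) (hs : s ∈ Set.Icc (0:ℝ) 1) (ht : t ∈ Set.Icc (0:ℝ) 1) :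
    |s - t| ≤ 1 := by
  rw [abs_le]; constructor <;> linarith [hs.1, hs.2, ht.1, ht.2]

lemma F_bound (γ : ℝ → E3)
    (hC2 : ContDiff ℝ 2 γ)
    (hper : Function.Periodic γ 1)
    (hinj : ∀ s t : ℝ, γ s = γ t → ∃ n : ℤ, s - t = n)
    (hunit : ∀ s : ℝ, ‖deriv γ s‖ = 1) :
    ∃ C : ℝ, ∀ s ∈ Set.Icc (0:ℝ) 1, ∀ t ∈ Set.Icc (0:ℝ) 1,
      (arcd s t = 0 → 1 / ‖γ s - γ t‖ ^ 2 - 1 / arcd s t ^ 2 = 0) ∧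
      |1 / ‖γ s - γ t‖ ^ 2 - 1 / arcd s t ^ 2| ≤ C := by
  obtain ⟨K, hK, hnear⟩ := near_bound γ hC2 hunit
  have hcont : Continuous γ := hC2.continuous
  have hac : Continuous (fun p : ℝ × ℝ => arcd p.1 p.2) := by
    unfold arcd; fun_prop
  have hcomp : IsCompact ((Set.Icc (0:ℝ) 1 ×ˢ Set.Icc (0:ℝ) 1) ∩
      {p : ℝ × ℝ | 1 / K ≤ arcd p.1 p.2}) :=
    (isCompact_Icc.prod isCompact_Icc).inter_right (isClosed_le continuous_const hac)
  obtain ⟨C, hC⟩ := hcomp.exists_bound_of_continuousOn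
    (f := fun p : ℝ × ℝ => 1 / ‖γ p.1 - γ p.2‖ ^ 2 - 1 / arcd p.1 p.2 ^ 2) (by
      rintro ⟨s, t⟩ ⟨⟨hs, ht⟩, hst⟩
      simp only [Set.mem_ofPred_eq] at hst hs ht
      have hpos : 0 < arcd s t := lt_of_lt_of_le (by positivity) hst
      have hne : γ s - γ t ≠ 0 := by
        intro h0
        obtain ⟨n, hn⟩ := hinj s t (sub_eq_zero.1 h0)
        unfold arcd at hpos
        rw [hn, lt_min_iff] at hpos
        have h1 : 0 < |n| := by exact_mod_cast hpos.1
        have h2 : |n| < 1 := by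
          have : |(n:ℝ)| < 1 := by linarith [hpos.2]
          exact_mod_cast this
        omega
      apply ContinuousAt.continuousWithinAt
      apply ContinuousAt.sub
      · apply ContinuousAt.div continuousAt_const (by fun_prop)
        simpa using hne
      · exact ContinuousAt.div continuousAt_const (hac.pow 2).continuousAt (by positivity))
  refine ⟨max C (4 * K ^ 2), ?_⟩
  -- wlog t ≤ s
  have main : ∀ s ∈ Set.Icc (0:ℝ) 1, ∀ t ∈ Set.Icc (0:ℝ) 1, t ≤ s →
      (arcd s t = 0 → 1 / ‖γ s - γ t‖ ^ 2 - 1 / arcd s t ^ 2 = 0) ∧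
      |1 / ‖γ s - γ t‖ ^ 2 - 1 / arcd s t ^ 2| ≤ max C (4 * K ^ 2) := by
    intro s hs t ht hts
    have hz : arcd s t = 0 → 1 / ‖γ s - γ t‖ ^ 2 - 1 / arcd s t ^ 2 = 0 := by
      intro h0
      have : γ s = γ t := by
        unfold arcd at h0
        rw [abs_of_nonneg (by linarith)] at h0
        rcases min_choice (s - t) (1 - (s - t)) with h | h
        · rw [h] at h0
          rw [sub_eq_zero.1 h0]
        · rw [h] at h0
          rw [show s = t + 1 by linarith, hper]
      simp [this, h0]
    refine ⟨hz, ?_⟩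
    have hnn : 0 ≤ arcd s t := by
      have := arcd_nonneg' s t hs ht
      unfold arcd
      exact le_min (abs_nonneg _) (by linarith)
    rcases eq_or_lt_of_le hnn with h0 | hpos
    · rw [hz h0.symm, abs_zero]
      exact le_max_of_le_right (by positivity)
    rcases le_or_gt (1 / K) (arcd s t) with hbig | hsm
    · exact le_max_of_le_left (hC (s, t) ⟨⟨hs, ht⟩, hbig⟩)
    apply le_max_of_le_right
    have hsm' : K * arcd s t ≤ 1 := by
      rw [lt_div_iff₀ hK] at hsm
      linarith
    have habs : |s - t| = s - t := abs_of_nonneg (by linarith)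
    rcases min_choice (s - t) (1 - (s - t)) with h | h
    · have ha : arcd s t = s - t := by unfold arcd; rw [habs, h]
      rw [ha] at hsm' hpos ⊢
      exact hnear t ⟨by linarith [ht.1], by linarith [ht.2]⟩ s
        ⟨by linarith [hs.1], by linarith [hs.2]⟩ (by linarith) hsm'
    · have ha : arcd s t = (t + 1) - s := by unfold arcd; rw [habs, h]; ring
      rw [ha] at hsm' hpos ⊢
      have := hnear s ⟨by linarith [hs.1], by linarith [hs.2]⟩ (t + 1)
        ⟨by linarith [ht.1], by linarith [ht.2]⟩ (by linarith) hsm'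
      rwa [hper, norm_sub_rev] at this
  intro s hs t ht
  rcases le_total t s with h | h
  · exact main s hs t ht h
  · have := main t ht s hs h
    have e : arcd t s = arcd s t := by unfold arcd; rw [abs_sub_comm]
    rwa [e, norm_sub_rev] at this

/-- O'Hara's energy `E⁽²⁾∘`: for a C² injective closed curve of length 1 parametrized by
arc length, the renormalized limit
`lim_{ε→0⁺} [ ∬_{d(s,t) ≥ ε} ds dt/|γ(s)−γ(t)|² − 2/ε ]` exists and equals
`−4 + ∬ ( 1/|γ(s)−γ(t)|² − 1/d(s,t)² ) ds dt`, the latter integrand being integrable. -/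
theorem ohara_energy_two_formulas (γ : ℝ → E3)
    (hC2 : ContDiff ℝ 2 γ)
    (hper : Function.Periodic γ 1)
    (hinj : ∀ s t : ℝ, γ s = γ t → ∃ n : ℤ, s - t = n)
    (hunit : ∀ s : ℝ, ‖deriv γ s‖ = 1) :
    IntegrableOn
      (fun p : ℝ × ℝ => 1 / ‖γ p.1 - γ p.2‖ ^ 2 - 1 / arcd p.1 p.2 ^ 2)
      (Set.Icc 0 1 ×ˢ Set.Icc 0 1) ∧
    Filter.Tendsto
      (fun ε : ℝ =>
        (∫ p in {p : ℝ × ℝ | p ∈ Set.Icc (0:ℝ) 1 ×ˢ Set.Icc (0:ℝ) 1 ∧ ε ≤ arcd p.1 p.2},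
            1 / ‖γ p.1 - γ p.2‖ ^ 2) - 2 / ε)
      (nhdsWithin 0 (Set.Ioi 0))
      (nhds (-4 + ∫ p in Set.Icc (0:ℝ) 1 ×ˢ Set.Icc (0:ℝ) 1,
          (1 / ‖γ p.1 - γ p.2‖ ^ 2 - 1 / arcd p.1 p.2 ^ 2))) := by
  obtain ⟨C, hC⟩ := F_bound γ hC2 hper hinj hunit
  have hcont : Continuous γ := hC2.continuous
  have hac : Continuous (fun p : ℝ × ℝ => arcd p.1 p.2) := by
    unfold arcd; fun_prop
  set Q : Set (ℝ × ℝ) := Set.Icc (0:ℝ) 1 ×ˢ Set.Icc (0:ℝ) 1 with hQ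
  have hQm : MeasurableSet Q := measurableSet_Icc.prod measurableSet_Icc
  have hQf : volume Q ≠ ⊤ := (isCompact_Icc.prod isCompact_Icc).measure_lt_top.ne
  set F : ℝ × ℝ → ℝ := fun p => 1 / ‖γ p.1 - γ p.2‖ ^ 2 - 1 / arcd p.1 p.2 ^ 2 with hF
  have hFm : Measurable F := by
    apply Measurable.sub
    · refine measurable_const.div (Continuous.measurable ?_)
      fun_prop
    · exact measurable_const.div (hac.pow 2).measurable
  have hFi : IntegrableOn F Q := by
    refine Measure.integrableOn_of_bounded (M := C) hQf hFm.aestronglyMeasurable ?_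
    rw [ae_restrict_iff' hQm]
    exact Filter.Eventually.of_forall fun p hp => (hC p.1 hp.1 p.2 hp.2).2
  refine ⟨hFi, ?_⟩
  set D : ℝ → Set (ℝ × ℝ) := fun ε => {p | ε ≤ arcd p.1 p.2} with hD
  have hDm : ∀ ε, MeasurableSet (D ε) := fun ε => (isClosed_le continuous_const hac).measurableSet
  have harc : ∀ p ∈ Q, arcd p.1 p.2 = rd (p.1 - p.2) := fun p hp =>
    (rd_eq _ (arcd_nonneg' p.1 p.2 hp.1 hp.2)).symm
  have hlim : Filter.Tendsto (fun ε : ℝ => ∫ p in Q, (D ε).indicator F p)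
      (nhdsWithin 0 (Set.Ioi 0)) (nhds (∫ p in Q, F p)) := by
    refine tendsto_integral_filter_of_dominated_convergence (fun p => ‖F p‖) ?_ ?_ hFi.norm ?_
    · exact Filter.Eventually.of_forall fun ε => (hFm.indicator (hDm ε)).aestronglyMeasurable
    · exact Filter.Eventually.of_forall fun ε => Filter.Eventually.of_forall fun p =>
        norm_indicator_le_norm_self _ _
    · rw [ae_restrict_iff' hQm]
      refine Filter.Eventually.of_forall fun p hp => ?_
      have hnn : 0 ≤ arcd p.1 p.2 := by rw [harc p hp]; exact abs_nonneg _
      rcases eq_or_lt_of_le hnn with h0 | hpos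
      · have hz : F p = 0 := (hC p.1 hp.1 p.2 hp.2).1 h0.symm
        have : (fun ε => (D ε).indicator F p) = fun _ => F p := by
          funext ε
          by_cases h : p ∈ D ε <;> simp [h, hz]
        rw [this]
        exact tendsto_const_nhds
      · refine tendsto_const_nhds.congr' ?_
        filter_upwards [nhdsWithin_le_nhds (Iio_mem_nhds hpos)] with ε hε
        rw [Set.indicator_of_mem]
        exact le_of_lt (Set.mem_Iio.1 hε)
  have := hlim.const_add (-4)
  refine this.congr' ?_
  filter_upwards [self_mem_nhdsWithin, nhdsWithin_le_nhds (Iio_mem_nhds (show (0:ℝ) < 1/2 by norm_num))]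
    with ε hε hε2
  have hε : 0 < ε := hε
  have hε2 : ε ≤ 1 / 2 := le_of_lt hε2
  have hset : {p : ℝ × ℝ | p ∈ Q ∧ ε ≤ arcd p.1 p.2} = Q ∩ D ε := rfl
  have hQD : MeasurableSet (Q ∩ D ε) := hQm.inter (hDm ε)
  have hI2 : ∫ p in Q ∩ D ε, 1 / arcd p.1 p.2 ^ 2 = 2 / ε - 4 := by
    rw [← int_sq ε hε hε2, ← setIntegral_indicator (hDm ε)]
    refine setIntegral_congr_fun hQm fun p hp => ?_
    simp only [GG, Set.indicator, hD, Set.mem_ofPred_eq, harc p hp]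
  have hi2 : IntegrableOn (fun p : ℝ × ℝ => 1 / arcd p.1 p.2 ^ 2) (Q ∩ D ε) := by
    refine Measure.integrableOn_of_bounded (M := 1 / ε ^ 2)
      (measure_ne_top_of_subset Set.inter_subset_left hQf)
      (measurable_const.div (hac.pow 2).measurable).aestronglyMeasurable ?_
    rw [ae_restrict_iff' hQD]
    refine Filter.Eventually.of_forall fun p hp => ?_
    rw [Real.norm_of_nonneg (by positivity)]
    have : ε ≤ arcd p.1 p.2 := hp.2
    gcongr
  rw [hset, setIntegral_indicator (hDm ε)]
  have hsum : ∫ p in Q ∩ D ε, 1 / ‖γ p.1 - γ p.2‖ ^ 2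
      = (∫ p in Q ∩ D ε, F p) + ∫ p in Q ∩ D ε, 1 / arcd p.1 p.2 ^ 2 := by
    rw [← integral_add (hFi.mono_set Set.inter_subset_left) hi2]
    simp [hF]
  rw [hsum, hI2]
  ring
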